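/- Every β(0,1)-tree U with open(U) = 1 can be written as σ(T_1,…,T_k) for a unique integer k ≥ 1 and unique β(0,1)-trees T_1, …, T_k; and every β(0,1)-tree U with open(U) > 1 can be written as ν_i(S,T) for a unique pair of β(0,1)-trees S, T and a unique integer i with open(S) = 1, T nontrivial, and 1 ≤ i ≤ root(T). -/

import Mathlib

/-!
Call a tree *valid* if it satisfies the label condition of a non-root node.  The proof rests on
the remark that a tree is a β(0,1)-tree exactly when it is valid and is either a leaf or has
label one more than its child sum (`isBeta_iff`).  Hence a node of the rightmost path of a
β(0,1)-tree is *not* open exactly when the subtree at its rightmost child is again a β(0,1)-tree,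
and everything can be proved by descending the rightmost path (`rightInduction`) within the
class of β(0,1)-trees, for as long as the nodes met are not open.

For `σ`: since `ρ(T_{k-1}, …, T_1, ε)` is a root labeled 1 whose children are the `T_j` relabeled 0
followed by a leaf, `σ` amounts to `μ₁(S, T)` with `S` of this shape.  The map `decT` recovers
`(T, S)` from `μ₁(S, T)` (`decT_muT`), because all labels down to the gluing node, and that of the
child preceding the glued part, have become positive.  This gives uniqueness.  Conversely, if only
the rightmost leaf of `U` is open, one descends to its parent and cuts off the longest suffix of
children labeled 0 (`exists_muT`).

For `ν`: in `ν_i(S, T)` the node at which `T` is glued is the first non-leaf moderate node on the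
rightmost path, and its label is `i - 1`.  Uniqueness follows (`nuT_inj`), and cutting at the first
such node gives existence (`exists_nuT`).  The labels above it are large enough to have `i - 1`
subtracted, since all the nodes above it are excessive.
-/

/-- Labeled rooted plane trees: each node carries a natural-number label and an
ordered list of subtrees. -/
inductive BTree : Type
  | node : ℕ → List BTree → BTree
deriving Repr

namespace BTree

/-- The trivial β(0,1)-tree ε: a single node labeled 0. -/
def eps : BTree := node 0 []

/-- The label of the root of a tree. -/
def label : BTree → ℕ
  | node n _ => n

/-- The list of subtrees of the root. -/
def children : BTree → List BTree
  | node _ ts => ts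

/-- The sum of the labels of the children of the root. -/
def childSum (t : BTree) : ℕ := (t.children.map label).sum

/-- Validity condition for non-root nodes of a β(0,1)-tree: leaves have label 0,
and the label of every node exceeds the sum of its children's labels by at most one. -/
inductive ValidSub : BTree → Prop
  | mk (n : ℕ) (ts : List BTree) :
      (ts = [] → n = 0) →
      n ≤ (ts.map label).sum + 1 →
      (∀ t ∈ ts, ValidSub t) →
      ValidSub (node n ts)

/-- `t` is a β(0,1)-tree: the trivial tree is the single node labeled 0; otherwise the
root label is one more than the sum of its children's labels, and every non-root node
has label at most one more than the sum of its children's labels, leaves having label 0. -/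
def IsBeta (t : BTree) : Prop :=
  (t.children = [] → t.label = 0) ∧
  (t.children ≠ [] → t.label = childSum t + 1) ∧
  ∀ c ∈ t.children, ValidSub c

mutual
/-- The rightmost path of a tree, from the root to the rightmost leaf; each node on
the path is recorded together with its full subtree. -/
def rpath : BTree → List BTree
  | node n ts => node n ts :: rpathL ts
def rpathL : List BTree → List BTree
  | [] => []
  | [t] => rpath t
  | _ :: t :: ts => rpathL (t :: ts)
end

/-- A node is moderate if its label does not exceed the sum of its children's labels. -/
def moderate (t : BTree) : Bool := decide (t.label ≤ childSum t)

/-- A node (on the rightmost path) is open iff it is a leaf (i.e. it is the rightmost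
leaf), or its rightmost child is a non-leaf moderate node. -/
def isOpenNode (t : BTree) : Bool :=
  match t.children.getLast? with
  | none => true
  | some c => !c.children.isEmpty && moderate c

/-- The statistic `root`: the label of the root. -/
def rootStat (t : BTree) : ℕ := t.label

/-- The statistic `open`: the number of open nodes (all of which lie on the
rightmost path), with open(ε) = 0. -/
def openStat : BTree → ℕ
  | node 0 [] => 0
  | t => (rpath t).countP isOpenNode

/-- The statistic `rmod`: the number of moderate nodes on the rightmost path,
with rmod(ε) = 0. -/
def rmodStat : BTree → ℕ
  | node 0 [] => 0
  | t => (rpath t).countP moderate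

mutual
/-- The number of nodes of a tree. -/
def size : BTree → ℕ
  | node _ ts => 1 + sizeL ts
def sizeL : List BTree → ℕ
  | [] => 0
  | t :: ts => size t + sizeL ts
end

mutual
/-- The number of excessive nodes of a tree (nodes whose label exceeds the sum of the
labels of their children). -/
def excT : BTree → ℕ
  | node n ts => (if (ts.map label).sum < n then 1 else 0) + excL ts
def excL : List BTree → ℕ
  | [] => 0
  | t :: ts => excT t + excL ts
end

/-- The sum U ⊕ V of two trees: identify the two roots into a new root labeled
root(U) + root(V) − 1, its children being those of U followed by those of V. -/
def oplus (u v : BTree) : BTree := node (u.label + v.label - 1) (u.children ++ v.children)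

/-- Relabel the root. -/
def setLabel (i : ℕ) (t : BTree) : BTree := node i t.children

/-- λ_i(T): join a new root, labeled i+1, by an edge to the old root, which is relabeled i. -/
def lam (i : ℕ) (t : BTree) : BTree := node (i + 1) [setLabel i t]

/-- Iterated ⊕ of a list of trees (ε for the empty list). -/
def oplusList : List BTree → BTree
  | [] => eps
  | [t] => t
  | t :: ts => oplus t (oplusList ts)

/-- ρ(T₁,…,T_k) = λ₀(T₁) ⊕ ⋯ ⊕ λ₀(T_k). -/
def rho (Ts : List BTree) : BTree := oplusList (Ts.map (lam 0))

/-- Add one to the label of the root. -/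
def incRoot (t : BTree) : BTree := node (t.label + 1) t.children

mutual
/-- Walk down the rightmost path of a tree looking for the i-th open node x, adding one
to each label on the way (through x, and through the rightmost child y of x if x is not
a leaf); at x, append the children of S. -/
def muT (S : BTree) : ℕ → BTree → BTree
  | i, node n ts =>
    if isOpenNode (node n ts) && decide (i ≤ 1) then
      if ts.isEmpty then node (n + 1) S.children
      else node (n + 1) (ts.dropLast ++ [incRoot (ts.getLastD eps)] ++ S.children)
    else
      node (n + 1) (muL S (if isOpenNode (node n ts) then i - 1 else i) ts)
def muL (S : BTree) (i : ℕ) : List BTree → List BTree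
  | [] => []
  | [t] => [muT S i t]
  | t :: ts => t :: muL S i ts
end

/-- μ_i(S,T): identify the i-th open node x on the rightmost path of T with the root of
S, keeping the label of x, and add one to each node on the rightmost path of T between
the root and y (inclusive), where y = x if x is a leaf and otherwise y is the rightmost
child of x.  (In particular μ₁(S,ε) = S when root(S) = 1.) -/
def mu (i : ℕ) (S T : BTree) : BTree := muT S i T

mutual
/-- Walk down the rightmost path of a tree adding j to every label; at the rightmost
leaf, attach the children of T. -/
def nuT (T : BTree) (j : ℕ) : BTree → BTree
  | node n [] => node (n + j) T.children
  | node n ts => node (n + j) (nuL T j ts)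
def nuL (T : BTree) (j : ℕ) : List BTree → List BTree
  | [] => []
  | [t] => [nuT T j t]
  | t :: ts => t :: nuL T j ts
end

/-- ν_i(S,T): identify the rightmost leaf x of S with the root of T, keeping the zero
label of x, and add i − 1 to each node on the rightmost path of S between the root and
x (inclusive).  (In particular ν₁(S,ε) = S.) -/
def nu (i : ℕ) (S T : BTree) : BTree := nuT T (i - 1) S

/-- σ(T₁,…,T_k) = μ₁(ρ(T_{k−1},…,T₁,ε), T_k). -/
def sigma (Ts : List BTree) : BTree :=
  mu 1 (rho (Ts.dropLast.reverse ++ [eps])) (Ts.getLastD eps)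

/-- The maximal suffix of a list of trees all of whose root labels are 0. -/
def zeroSuffix : List BTree → List BTree
  | [] => []
  | t :: ts =>
    let z := zeroSuffix ts
    if z.length = ts.length ∧ t.label = 0 then t :: z else z

/-- Subtract one from the label of the root. -/
def decRoot (t : BTree) : BTree := node (t.label - 1) t.children

mutual
/-- Inverse of μ on β(0,1)-trees with root label > 1: walk down the rightmost path to
the parent x of the first node labeled 0 on the path (subtracting one from the labels
on the way); the maximal zero-labeled suffix of the children of x is the list of
children of S, the rest (with the label of its last element decremented) are the
children of x in T.  Returns the pair (T, S) such that the input is μ_i(S,T). -/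
def decT : BTree → BTree × BTree
  | node n ts =>
    if (ts.getLastD eps).label = 0 then
      let zs := zeroSuffix ts
      let ps := ts.take (ts.length - zs.length)
      (node (n - 1) (if ps.isEmpty then [] else ps.dropLast ++ [decRoot (ps.getLastD eps)]),
       node 1 zs)
    else
      (node (n - 1) (decL ts).1, (decL ts).2)
def decL : List BTree → List BTree × BTree
  | [] => ([], eps)
  | [t] => ([(decT t).1], (decT t).2)
  | t :: ts => (t :: (decL ts).1, (decL ts).2)
end

/-- Restore the root label of a β(0,1)-tree whose root label was forgotten:
ε for a single node, and otherwise one plus the sum of the children's labels. -/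
def makeRoot : BTree → BTree
  | node _ [] => eps
  | node _ ts => node ((ts.map label).sum + 1) ts

/-- Fueled version of the map g.  A β(0,1)-tree with root label 1 is ρ(T₁,…,T_k) where
the Tⱼ are recovered from the children via `makeRoot`, and g maps it to
σ(g(T₁),…,g(T_k)); a β(0,1)-tree U with root label > 1 is μ_i(S,T) where (T,S) = decT U
and i = open(U) + 1 − open(S) (since open(μ_i(S,T)) = i − 1 + open(S)), and g maps it
to ν_i(g(S),g(T)); finally g(ε) = ε. -/
def gF : ℕ → BTree → BTree
  | 0, t => t
  | fuel + 1, t =>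
    match t with
    | node 0 _ => t
    | node 1 cs => sigma (cs.map fun c => gF fuel (makeRoot c))
    | node _ _ =>
      nu (openStat t + 1 - openStat (decT t).2) (gF fuel (decT t).2) (gF fuel (decT t).1)

/-- The map g on β(0,1)-trees: g(ε) = ε, g(ρ(T₁,…,T_k)) = σ(g(T₁),…,g(T_k)), and
g(μ_i(S,T)) = ν_i(g(S), g(T)).  (The number of nodes suffices as fuel since all
recursive calls are on trees with strictly fewer nodes.) -/
def g (t : BTree) : BTree := gF (size t) t


/-! ### Descending the rightmost path -/

/-- Induction along the rightmost path: only the last child of a node has an induction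
hypothesis. -/
theorem rightInduction {P : BTree → Prop} (leaf : ∀ n, P (node n []))
    (step : ∀ n l c, P c → P (node n (l ++ [c]))) : ∀ t, P t
  | node n ts => by
    rcases List.eq_nil_or_concat' ts with rfl | ⟨l, c, rfl⟩
    · exact leaf n
    · exact step n l c (rightInduction leaf step c)
termination_by t => sizeOf t
decreasing_by
  subst_vars
  have h : c ∈ l ++ [c] := by simp
  have := List.sizeOf_lt_of_mem h
  simp only [node.sizeOf_spec]
  omega

theorem label_node (n : ℕ) (ts : List BTree) : (node n ts).label = n := rfl

/-- The number of open nodes on the rightmost path, without the convention `open(ε) = 0`. -/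
def openCount (t : BTree) : ℕ := (rpath t).countP isOpenNode

theorem rpathL_concat (l : List BTree) (c : BTree) : rpathL (l ++ [c]) = rpath c := by
  induction l with
  | nil => simp [rpathL]
  | cons a l ih => cases l <;> simp_all [rpathL]

theorem muL_concat (S : BTree) (i : ℕ) (l : List BTree) (c : BTree) :
    muL S i (l ++ [c]) = l ++ [muT S i c] := by
  induction l with
  | nil => simp [muL]
  | cons a l ih => cases l <;> simp_all [muL]

theorem nuL_concat (T : BTree) (j : ℕ) (l : List BTree) (c : BTree) :
    nuL T j (l ++ [c]) = l ++ [nuT T j c] := by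
  induction l with
  | nil => simp [nuL]
  | cons a l ih => cases l <;> simp_all [nuL]

theorem decL_concat (l : List BTree) (c : BTree) :
    decL (l ++ [c]) = (l ++ [(decT c).1], (decT c).2) := by
  induction l with
  | nil => simp [decL]
  | cons a l ih => cases l <;> simp_all [decL]

theorem nuT_leaf (T : BTree) (j n : ℕ) : nuT T j (node n []) = node (n + j) T.children := by
  simp [nuT]

theorem nuT_concat (T : BTree) (j n : ℕ) (l : List BTree) (c : BTree) :
    nuT T j (node n (l ++ [c])) = node (n + j) (l ++ [nuT T j c]) := by
  rw [← nuL_concat]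
  cases l <;> simp [nuT]

theorem isOpenNode_concat (n : ℕ) (l : List BTree) (c : BTree) :
    isOpenNode (node n (l ++ [c])) = true ↔ c.children ≠ [] ∧ c.label ≤ c.childSum := by
  simp [isOpenNode, children, moderate]

theorem openCount_leaf (n : ℕ) : openCount (node n []) = 1 := by
  simp [openCount, rpath, rpathL, isOpenNode, children]

theorem openCount_concat (n : ℕ) (l : List BTree) (c : BTree) :
    openCount (node n (l ++ [c])) =
      openCount c + if isOpenNode (node n (l ++ [c])) then 1 else 0 := by
  simp [openCount, rpath, rpathL_concat, List.countP_cons]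

theorem openCount_pos (t : BTree) : 1 ≤ openCount t := by
  induction t using rightInduction with
  | leaf n => simp [openCount_leaf]
  | step n l c ih => rw [openCount_concat]; omega

theorem muT_leaf (S : BTree) (n : ℕ) : muT S 1 (node n []) = node (n + 1) S.children := by
  simp [muT, isOpenNode, children]

theorem muT_of_open (S : BTree) (n : ℕ) (l : List BTree) (c : BTree)
    (h : isOpenNode (node n (l ++ [c])) = true) :
    muT S 1 (node n (l ++ [c])) = node (n + 1) (l ++ [incRoot c] ++ S.children) := by
  simp [muT, h]

theorem muT_of_not_open (S : BTree) (n : ℕ) (l : List BTree) (c : BTree)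
    (h : ¬ isOpenNode (node n (l ++ [c])) = true) :
    muT S 1 (node n (l ++ [c])) = node (n + 1) (l ++ [muT S 1 c]) := by
  simp [muT, h, muL_concat]

theorem label_muT (S : BTree) (i : ℕ) (t : BTree) : (muT S i t).label = t.label + 1 := by
  cases t
  simp only [muT]
  split_ifs <;> rfl

theorem label_nuT (T : BTree) (j : ℕ) (t : BTree) : (nuT T j t).label = t.label + j := by
  cases t with
  | node n ts => cases ts <;> simp [nuT, label]

/-! ### β(0,1)-trees as a class of subtrees -/

theorem validSub_iff (t : BTree) : ValidSub t ↔
    (t.children = [] → t.label = 0) ∧ t.label ≤ t.childSum + 1 ∧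
      ∀ c ∈ t.children, ValidSub c := by
  constructor
  · rintro ⟨n, ts, h1, h2, h3⟩
    exact ⟨h1, h2, h3⟩
  · cases t
    rintro ⟨h1, h2, h3⟩
    exact ⟨_, _, h1, h2, h3⟩

/-- A β(0,1)-tree is a valid subtree that is a leaf or has an excessive root. -/
theorem isBeta_iff (t : BTree) :
    IsBeta t ↔ ValidSub t ∧ (t.children ≠ [] → t.childSum < t.label) := by
  rw [validSub_iff, IsBeta]
  constructor
  · rintro ⟨h1, h2, h3⟩
    refine ⟨⟨h1, ?_, h3⟩, fun h => by have := h2 h; omega⟩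
    by_cases h : t.children = []
    · have := h1 h; omega
    · have := h2 h; omega
  · rintro ⟨⟨h1, h2, h3⟩, h4⟩
    exact ⟨h1, fun h => by have := h4 h; omega, h3⟩

theorem isBeta_leaf (n : ℕ) : IsBeta (node n []) ↔ n = 0 := by
  simp [IsBeta, children, label]

theorem childSum_concat (n : ℕ) (l : List BTree) (c : BTree) :
    childSum (node n (l ++ [c])) = (l.map label).sum + c.label := by
  simp [childSum, children]

theorem isBeta_concat (n : ℕ) (l : List BTree) (c : BTree) :
    IsBeta (node n (l ++ [c])) ↔
      n = (l.map label).sum + c.label + 1 ∧ (∀ d ∈ l, ValidSub d) ∧ ValidSub c := by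
  simp only [IsBeta, childSum_concat]
  simp [children, label, or_imp, forall_and]

theorem validSub_eps : ValidSub eps := by
  rw [validSub_iff]
  simp [eps, children, label]

/-- Below a node of the rightmost path that is not open, the subtree is again a β(0,1)-tree. -/
theorem isOpenNode_iff_not_isBeta (n : ℕ) (l : List BTree) (c : BTree) (hc : ValidSub c) :
    isOpenNode (node n (l ++ [c])) = true ↔ ¬ IsBeta c := by
  rw [isOpenNode_concat, isBeta_iff]
  simp [hc]

theorem openStat_of_isBeta (t : BTree) (ht : IsBeta t) :
    openStat t = if t.children = [] then 0 else openCount t := by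
  cases t with
  | node n ts =>
    cases ts with
    | nil => obtain rfl := (isBeta_leaf n).1 ht; simp [openStat, children]
    | cons a ts => cases n <;> simp [openStat, children, openCount]

theorem isBeta_makeRoot (c : BTree) (hc : ValidSub c) : IsBeta (makeRoot c) := by
  rw [validSub_iff] at hc
  cases c with
  | node n ts =>
    cases ts with
    | nil => simp [makeRoot, eps, isBeta_leaf]
    | cons a ts => exact ⟨by simp [makeRoot, children], fun _ => rfl, hc.2.2⟩

theorem children_makeRoot (c : BTree) : (makeRoot c).children = c.children := by
  cases c with
  | node n ts => cases ts <;> rfl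

/-- A β(0,1)-tree is determined by its children. -/
theorem IsBeta.eq_of_children {S T : BTree} (hS : IsBeta S) (hT : IsBeta T)
    (h : S.children = T.children) : S = T := by
  obtain ⟨m, ss⟩ := S
  obtain ⟨n, ts⟩ := T
  obtain rfl : ss = ts := h
  rcases eq_or_ne ss [] with rfl | hs
  · rw [(isBeta_leaf m).1 hS, (isBeta_leaf n).1 hT]
  · have h1 : m = _ := hS.2.1 hs
    have h2 : n = _ := hT.2.1 hs
    rw [h1, h2]
    rfl

theorem validSub_setLabel_zero (T : BTree) (hT : IsBeta T) : ValidSub (setLabel 0 T) := by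
  rw [validSub_iff]
  exact ⟨fun _ => rfl, Nat.zero_le _, hT.2.2⟩

theorem makeRoot_setLabel (T : BTree) (hT : IsBeta T) : makeRoot (setLabel 0 T) = T :=
  (isBeta_makeRoot _ (validSub_setLabel_zero T hT)).eq_of_children hT (children_makeRoot _)

theorem setLabel_makeRoot (c : BTree) (hc : c.label = 0) : setLabel 0 (makeRoot c) = c := by
  obtain ⟨n, ts⟩ := c
  obtain rfl : n = 0 := hc
  exact congrArg (node 0) (children_makeRoot _)

/-! ### The decomposition by `σ` -/

theorem zeroSuffix_of_forall (zs : List BTree) (hz : ∀ z ∈ zs, z.label = 0) :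
    zeroSuffix zs = zs := by
  induction zs with
  | nil => rfl
  | cons a zs ih =>
    have := ih fun z h => hz z (by simp [h])
    simp [zeroSuffix, this, hz a (by simp)]

theorem zeroSuffix_append (l : List BTree) (c : BTree) (hc : c.label ≠ 0) (zs : List BTree)
    (hz : ∀ z ∈ zs, z.label = 0) : zeroSuffix (l ++ c :: zs) = zs := by
  induction l with
  | nil => simp [zeroSuffix, zeroSuffix_of_forall zs hz, hc]
  | cons a l ih =>
    simp only [List.cons_append, zeroSuffix, ih, List.length_append, List.length_cons]
    rw [if_neg]
    omega

theorem label_getLastD_append (l zs : List BTree) (hne : zs ≠ [])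
    (hz : ∀ z ∈ zs, z.label = 0) : ((l ++ zs).getLastD eps).label = 0 := by
  obtain ⟨zs, z, rfl⟩ := (List.eq_nil_or_concat' zs).resolve_left hne
  rw [← List.append_assoc]
  simpa using hz z (by simp)

/-- `decT` undoes `μ₁` as soon as the children of the glued tree are all labeled 0. -/
theorem decT_muT (zs : List BTree) (hne : zs ≠ []) (hz : ∀ z ∈ zs, z.label = 0) (T : BTree) :
    decT (muT (node 1 zs) 1 T) = (T, node 1 zs) := by
  induction T using rightInduction with
  | leaf n =>
    have := label_getLastD_append [] zs hne hz
    rw [List.nil_append] at this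
    simp only [muT_leaf, children]
    rw [decT, if_pos this]
    simp [zeroSuffix_of_forall zs hz]
  | step n l c ih =>
    by_cases h : isOpenNode (node n (l ++ [c])) = true
    · rw [muT_of_open _ _ _ _ h]
      simp only [children]
      have hc : (incRoot c).label ≠ 0 := by simp [incRoot, label]
      rw [decT, if_pos (label_getLastD_append _ zs hne hz)]
      have h1 : zeroSuffix (l ++ [incRoot c] ++ zs) = zs := by
        simpa using zeroSuffix_append l _ hc zs hz
      have h2 : decRoot (incRoot c) = c := by
        cases c; simp [decRoot, incRoot, label, children]
      have h3 : (l ++ [incRoot c] ++ zs).length - zs.length = (l ++ [incRoot c]).length := by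
        rw [List.length_append, Nat.add_sub_cancel]
      simp only [h1, h3, List.take_left]
      simp [h2]
    · rw [muT_of_not_open _ _ _ _ h, decT, if_neg (by simp [label_muT]), decL_concat, ih]
      rfl

theorem exists_zero_suffix (l : List BTree) :
    ∃ p zs, l = p ++ zs ∧ (∀ z ∈ zs, z.label = 0) ∧
      (p = [] ∨ ∃ q y, p = q ++ [y] ∧ y.label ≠ 0) := by
  induction l using List.reverseRecOn with
  | nil => exact ⟨[], [], by simp⟩
  | append_singleton l a ih =>
    by_cases ha : a.label = 0
    · obtain ⟨p, zs, rfl, hz, hp⟩ := ih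
      refine ⟨p, zs ++ [a], by simp, ?_, hp⟩
      simp only [List.mem_append, List.mem_singleton]
      rintro z (h | rfl)
      exacts [hz z h, ha]
    · exact ⟨l ++ [a], [], by simp, by simp, Or.inr ⟨l, a, rfl, ha⟩⟩

theorem sum_label_eq_zero (zs : List BTree) (hz : ∀ z ∈ zs, z.label = 0) :
    (zs.map label).sum = 0 := by
  simpa [List.sum_eq_zero_iff] using hz

/-- Every nontrivial β(0,1)-tree whose only open node is its rightmost leaf is `μ₁(S, T)` for some
`S` of the shape `ρ(T_{k-1}, …, T_1, ε)`, whose root has `zs` followed by a leaf as children. -/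
theorem exists_muT (U : BTree) (hU : IsBeta U) (hne : U.children ≠ []) (hop : openCount U = 1) :
    ∃ T zs, IsBeta T ∧ (∀ z ∈ zs, ValidSub z ∧ z.label = 0) ∧
      U = muT (node 1 (zs ++ [eps])) 1 T := by
  induction U using rightInduction with
  | leaf n => exact absurd rfl hne
  | step n l c ih =>
    obtain ⟨hn, hl, hc⟩ := (isBeta_concat _ _ _).1 hU
    rw [openCount_concat] at hop
    have hpos := openCount_pos c
    have hno : ¬ isOpenNode (node n (l ++ [c])) = true := fun h => by
      rw [if_pos h] at hop; omega
    rw [if_neg hno] at hop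
    have hcb : IsBeta c := by
      rw [isOpenNode_iff_not_isBeta _ _ _ hc] at hno
      exact not_not.1 hno
    by_cases hce : c.children = []
    · obtain rfl : c = eps := hcb.eq_of_children ((isBeta_leaf 0).2 rfl) hce
      obtain ⟨p, zs, rfl, hz, hp⟩ := exists_zero_suffix l
      have hs := sum_label_eq_zero zs hz
      simp only [eps, label, List.map_append, List.sum_append, hs] at hn
      have hzv : ∀ z ∈ zs, ValidSub z ∧ z.label = 0 := fun z h => ⟨hl z (by simp [h]), hz z h⟩
      rcases hp with rfl | ⟨q, y, rfl, hy⟩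
      · refine ⟨eps, zs, (isBeta_leaf 0).2 rfl, hzv, ?_⟩
        simp at hn
        simp [eps, muT_leaf, children, hn]
      · have hyv : ValidSub y := hl y (by simp)
        obtain ⟨m, ys⟩ := y
        obtain ⟨hy1, hy2, hy3⟩ := (validSub_iff _).1 hyv
        simp only [label, children] at hy hy1 hy2 hy3
        have hyne : ys ≠ [] := fun h => hy (hy1 h)
        have hcs : childSum (node (m - 1) ys) = childSum (node m ys) := rfl
        have hopen : isOpenNode (node (n - 1) (q ++ [node (m - 1) ys])) = true := by
          rw [isOpenNode_concat]
          refine ⟨hyne, ?_⟩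
          simp only [label_node]
          omega
        refine ⟨node (n - 1) (q ++ [node (m - 1) ys]), zs, ?_, hzv, ?_⟩
        · rw [isBeta_concat]
          simp [label] at hn
          refine ⟨by simp only [label_node]; omega, fun d h => hl d (by simp [h]), ?_⟩
          rw [validSub_iff]
          refine ⟨fun h => absurd h hyne, ?_, hy3⟩
          simp only [label_node]
          omega
        · rw [muT_of_open _ _ _ _ hopen]
          have h1 : n - 1 + 1 = n := by omega
          have h2 : m - 1 + 1 = m := by omega
          simp [incRoot, label, children, h1, h2]
    · obtain ⟨T, zs, hT, hz, rfl⟩ := ih hcb hce hop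
      rw [label_muT] at hn
      refine ⟨node (n - 1) (l ++ [T]), zs, ?_, hz, ?_⟩
      · rw [isBeta_concat]
        exact ⟨by omega, hl, ((isBeta_iff T).1 hT).1⟩
      · rw [muT_of_not_open]
        · congr 1
          omega
        · rw [isOpenNode_iff_not_isBeta _ _ _ ((isBeta_iff T).1 hT).1]
          exact not_not.2 hT

theorem rho_eq (Ts : List BTree) (h : Ts ≠ []) : rho Ts = node 1 (Ts.map (setLabel 0)) := by
  unfold rho
  induction Ts with
  | nil => exact absurd rfl h
  | cons a Ts ih =>
    cases Ts with
    | nil => simp [oplusList, lam]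
    | cons b Ts =>
      have := ih (by simp)
      simp only [List.map_cons] at this ⊢
      rw [oplusList, this]
      · simp [oplus, lam, label, children]
      · simp

theorem sigma_concat (Rs : List BTree) (T : BTree) :
    sigma (Rs ++ [T]) = muT (node 1 (Rs.reverse.map (setLabel 0) ++ [eps])) 1 T := by
  simp [sigma, mu, rho_eq, setLabel, eps, children]

theorem sigma_inj (Ts Ts' : List BTree) (hne : Ts ≠ []) (hne' : Ts' ≠ [])
    (hT : ∀ T ∈ Ts, IsBeta T) (hT' : ∀ T ∈ Ts', IsBeta T) (h : sigma Ts = sigma Ts') :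
    Ts = Ts' := by
  obtain ⟨Rs, T, rfl⟩ := (List.eq_nil_or_concat' Ts).resolve_left hne
  obtain ⟨Rs', T', rfl⟩ := (List.eq_nil_or_concat' Ts').resolve_left hne'
  have key : ∀ (Rs : List BTree) (T : BTree), decT (sigma (Rs ++ [T])) =
      (T, node 1 (Rs.reverse.map (setLabel 0) ++ [eps])) := fun Rs T => by
    rw [sigma_concat, decT_muT _ (by simp)]
    simp only [List.mem_append, List.mem_map, List.mem_singleton]
    rintro z (⟨t, -, rfl⟩ | rfl) <;> rfl
  have recover : ∀ Rs : List BTree, (∀ R ∈ Rs, IsBeta R) →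
      (Rs.map (setLabel 0)).map makeRoot = Rs := fun Rs hR => by
    conv_rhs => rw [← List.map_id Rs]
    rw [List.map_map]
    exact List.map_congr_left fun R h => makeRoot_setLabel R (hR R h)
  have h2 := key Rs T
  rw [h, key Rs' T'] at h2
  simp only [Prod.mk.injEq, node.injEq, true_and, List.append_cancel_right_eq,
    List.map_reverse, List.reverse_inj] at h2
  obtain ⟨rfl, h3⟩ := h2
  rw [← recover Rs fun R h => hT R (by simp [h]), ← h3,
    recover Rs' fun R h => hT' R (by simp [h])]

theorem exists_sigma (U : BTree) (hU : IsBeta U) (hne : U.children ≠ [])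
    (hop : openCount U = 1) :
    ∃ Ts : List BTree, Ts ≠ [] ∧ (∀ T ∈ Ts, IsBeta T) ∧ U = sigma Ts := by
  obtain ⟨T, zs, hT, hz, rfl⟩ := exists_muT U hU hne hop
  refine ⟨(zs.map makeRoot).reverse ++ [T], by simp, ?_, ?_⟩
  · simp only [List.mem_append, List.mem_reverse, List.mem_map, List.mem_singleton]
    rintro R (⟨z, h, rfl⟩ | rfl)
    exacts [isBeta_makeRoot z (hz z h).1, hT]
  · have : (zs.map makeRoot).map (setLabel 0) = zs := by
      conv_rhs => rw [← List.map_id zs]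
      rw [List.map_map]
      exact List.map_congr_left fun z h => setLabel_makeRoot z (hz z h).2
    rw [sigma_concat, List.reverse_reverse, this]

/-! ### The decomposition by `ν` -/

/-- A non-leaf β(0,1)-tree keeps an excessive root when another tree is glued at its rightmost
leaf, since its label and that of its last child grow by the same amount. -/
theorem childSum_nuT_lt (T : BTree) (j n : ℕ) (l : List BTree) (c : BTree)
    (h : IsBeta (node n (l ++ [c]))) :
    (nuT T j (node n (l ++ [c]))).childSum < (nuT T j (node n (l ++ [c]))).label := by
  have := ((isBeta_concat _ _ _).1 h).1
  rw [label_nuT, nuT_concat, childSum_concat, label_nuT]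
  simp only [label_node]
  omega

theorem label_le_childSum_nuT_leaf (T : BTree) (j : ℕ) (hT : IsBeta T) (hj : j < T.label) :
    (nuT T j (node 0 [])).label ≤ (nuT T j (node 0 [])).childSum := by
  have h1 : T.children ≠ [] := fun h => by have := hT.1 h; omega
  have h2 := hT.2.1 h1
  have h3 : childSum (node (0 + j) T.children) = T.childSum := rfl
  rw [nuT_leaf, h3]
  simp only [label_node]
  omega

theorem isBeta_of_openCount (n : ℕ) (l : List BTree) (c : BTree)
    (h : IsBeta (node n (l ++ [c]))) (hop : openCount (node n (l ++ [c])) = 1) :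
    IsBeta c ∧ openCount c = 1 := by
  have hpos := openCount_pos c
  rw [openCount_concat] at hop
  split_ifs at hop with ho
  · omega
  · rw [isOpenNode_iff_not_isBeta _ _ _ ((isBeta_concat _ _ _).1 h).2.2] at ho
    exact ⟨not_not.1 ho, hop⟩

/-- The map `(i, S, T) ↦ ν_i(S, T)` is injective, with `j = i - 1`. The trees `S` and `S'` may be
leaves, as the induction requires: gluing at a leaf produces a moderate root, gluing at any other
tree an excessive one. -/
theorem nuT_inj {T T' : BTree} {j j' : ℕ} (hT : IsBeta T) (hT' : IsBeta T') (hj : j < T.label)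
    (hj' : j' < T'.label) (S S' : BTree) (hS : IsBeta S) (hS' : IsBeta S')
    (hop : openCount S = 1) (hop' : openCount S' = 1) (h : nuT T j S = nuT T' j' S') :
    S = S' ∧ T = T' ∧ j = j' := by
  induction S using rightInduction generalizing S' with
  | leaf n =>
    obtain rfl := (isBeta_leaf n).1 hS
    obtain ⟨n', ts'⟩ := S'
    rcases List.eq_nil_or_concat' ts' with rfl | ⟨l', c', rfl⟩
    · obtain rfl := (isBeta_leaf n').1 hS'
      simp only [nuT_leaf, node.injEq, zero_add] at h
      exact ⟨rfl, hT.eq_of_children hT' h.2, h.1⟩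
    · have h1 := label_le_childSum_nuT_leaf T j hT hj
      have h2 := childSum_nuT_lt T' j' n' l' c' hS'
      rw [← h] at h2
      omega
  | step n l c ih =>
    obtain ⟨n', ts'⟩ := S'
    rcases List.eq_nil_or_concat' ts' with rfl | ⟨l', c', rfl⟩
    · obtain rfl := (isBeta_leaf n').1 hS'
      have h1 := label_le_childSum_nuT_leaf T' j' hT' hj'
      have h2 := childSum_nuT_lt T j n l c hS
      rw [h] at h2
      omega
    · obtain ⟨hc, hc1⟩ := isBeta_of_openCount _ _ _ hS hop
      obtain ⟨hc', hc1'⟩ := isBeta_of_openCount _ _ _ hS' hop'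
      simp only [nuT_concat, node.injEq] at h
      obtain ⟨hn, hl⟩ := h
      obtain ⟨rfl, hl⟩ := List.append_inj' hl rfl
      obtain ⟨rfl, rfl, rfl⟩ := ih c' hc hc' hc1 hc1' (by simpa using hl)
      exact ⟨by simpa using hn, rfl, rfl⟩

/-- The case distinction is whether the root is open: if so, `T` is glued at its rightmost child, and
`j = i - 1` is the label of that child. -/
theorem exists_nuT (U : BTree) (hU : IsBeta U) (hop : 1 < openCount U) :
    ∃ j S T, IsBeta S ∧ IsBeta T ∧ S.children ≠ [] ∧ openCount S = 1 ∧ j < T.label ∧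
      U = nuT T j S := by
  induction U using rightInduction with
  | leaf n => simp [openCount_leaf] at hop
  | step n l c ih =>
    obtain ⟨hn, hl, hc⟩ := (isBeta_concat _ _ _).1 hU
    rw [openCount_concat] at hop
    -- A node whose rightmost child carries a β(0,1)-tree is not open.
    have count : ∀ m d, IsBeta d → openCount d = 1 → openCount (node m (l ++ [d])) = 1 := by
      intro m d hd hd1
      rw [openCount_concat, if_neg, hd1]
      rw [isOpenNode_iff_not_isBeta _ _ _ ((isBeta_iff d).1 hd).1]
      exact not_not.2 hd
    by_cases ho : isOpenNode (node n (l ++ [c])) = true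
    · obtain ⟨hne, hm⟩ := (isOpenNode_concat _ _ _).1 ho
      refine ⟨c.label, node (n - c.label) (l ++ [eps]), makeRoot c, ?_, isBeta_makeRoot c hc,
        by simp [children], count _ _ ((isBeta_leaf 0).2 rfl) (openCount_leaf 0), ?_, ?_⟩
      · rw [isBeta_concat]
        exact ⟨by simp only [eps, label_node]; omega, hl, validSub_eps⟩
      · have h1 := (isBeta_makeRoot c hc).2.1 (by rwa [children_makeRoot])
        rw [h1, childSum, children_makeRoot]
        exact Nat.lt_succ_of_le hm
      · rw [nuT_concat, eps, nuT_leaf, children_makeRoot]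
        have h1 : n - c.label + c.label = n := by omega
        rw [h1, zero_add]
        cases c
        rfl
    · rw [if_neg ho] at hop
      rw [isOpenNode_iff_not_isBeta _ _ _ hc] at ho
      obtain ⟨j, S, T, hS, hT, -, hS1, hj, rfl⟩ := ih (not_not.1 ho) hop
      rw [label_nuT] at hn
      refine ⟨j, node (n - j) (l ++ [S]), T, ?_, hT, by simp [children], count _ _ hS hS1, hj, ?_⟩
      · rw [isBeta_concat]
        exact ⟨by omega, hl, ((isBeta_iff S).1 hS).1⟩
      · rw [nuT_concat]
        congr 1
        omega

/-- Every β(0,1)-tree U with open(U) = 1 can be written as σ(T₁,…,T_k) for a unique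
(nonempty) list of β(0,1)-trees T₁, …, T_k; and every β(0,1)-tree U with open(U) > 1
can be written as ν_i(S,T) for a unique pair of β(0,1)-trees S, T and a unique integer
i with open(S) = 1, T nontrivial and 1 ≤ i ≤ root(T). -/
theorem sigma_nu_decomposition (U : BTree) (hU : IsBeta U) :
    (openStat U = 1 →
      ∃! Ts : List BTree, Ts ≠ [] ∧ (∀ T ∈ Ts, IsBeta T) ∧ U = sigma Ts) ∧
    (1 < openStat U →
      ∃! p : ℕ × BTree × BTree, IsBeta p.2.1 ∧ IsBeta p.2.2 ∧
        openStat p.2.1 = 1 ∧ p.2.2 ≠ eps ∧ 1 ≤ p.1 ∧ p.1 ≤ rootStat p.2.2 ∧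
        U = nu p.1 p.2.1 p.2.2) := by
  rw [openStat_of_isBeta U hU]
  split_ifs with hne
  · simp
  refine ⟨fun hop => ?_, fun hop => ?_⟩
  · obtain ⟨Ts, h1, h2, h3⟩ := exists_sigma U hU hne hop
    refine ⟨Ts, ⟨h1, h2, h3⟩, ?_⟩
    rintro Ts' ⟨h1', h2', h3'⟩
    exact sigma_inj _ _ h1' h1 h2' h2 (h3' ▸ h3)
  · obtain ⟨j, S, T, hS, hT, hSne, hS1, hj, rfl⟩ := exists_nuT U hU hop
    refine ⟨(j + 1, S, T), ⟨hS, hT, ?_, ?_, by simp, hj, rfl⟩, ?_⟩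
    · rw [openStat_of_isBeta S hS, if_neg hSne, hS1]
    · rintro rfl
      simp [eps, label] at hj
    · rintro ⟨i, S', T'⟩ ⟨hS', hT', hop', -, hi, hi', h⟩
      simp only [rootStat] at hS' hT' hop' hi hi' h
      rw [openStat_of_isBeta S' hS'] at hop'
      split_ifs at hop'
      obtain ⟨rfl, rfl, rfl⟩ := nuT_inj hT hT' hj (by omega) S S' hS hS' hS1 hop' h
      have : i - 1 + 1 = i := by omega
      rw [this]

end BTree
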